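/- For every η ∈ ℂ, the subspace R_η of the complex vector space of functions ℂ² → ℂ, defined as the linear span of the functions F_η(a,b,c₁,c₂;·,·) over all (a,b,c₁,c₂) ∈ ℂ⁴, has dimension 6. -/

import Mathlib

open Complex

noncomputable section

/-- The Jacobi theta function `θ₁(z|τ)`. -/
def θ (τ z : ℂ) : ℂ :=
  I * ∑' n : ℤ, (-1 : ℂ) ^ n * Complex.exp (Real.pi * I * τ * ((n : ℂ) - 1/2) ^ 2) *
    Complex.exp (Real.pi * I * (2 * (n : ℂ) - 1) * z)

/-- `f(α,β,γ;z) = θ(z+α)θ(z+β)θ(z+γ)θ(z−α−β−γ)`. -/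
def fV (τ α β γ z : ℂ) : ℂ :=
  θ τ (z + α) * θ τ (z + β) * θ τ (z + γ) * θ τ (z - α - β - γ)

/-- The generating relation functions `F_η(a,b,c₁,c₂;z₁,z₂)`. -/
def Fη (τ η a b c₁ c₂ z₁ z₂ : ℂ) : ℂ :=
  fV τ (a - η/2) (b - η/2) (c₁ + η/2) z₁ * fV τ (a + η/2) (b + η/2) (c₂ - η/2) z₂ -
  fV τ (a - η/2) (b - η/2) (c₂ + η/2) z₁ * fV τ (a + η/2) (b + η/2) (c₁ - η/2) z₂

/-- The relation space `R_η ⊂ V⊗V`, the span of the functions `F_η(a,b,c₁,c₂;·,·)`. -/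
def Rspace (τ η : ℂ) : Submodule ℂ (ℂ × ℂ → ℂ) :=
  Submodule.span ℂ
    {F | ∃ a b c₁ c₂ : ℂ, F = fun p : ℂ × ℂ => Fη τ η a b c₁ c₂ p.1 p.2}

/-- The theta series `∑ₙ exp(πiτ(n+r)² + 2πi(n+r)z)` with characteristic `r`. -/
def thetaChar (r τ z : ℂ) : ℂ :=
  ∑' n : ℤ, cexp (Real.pi * I * τ * (n + r) ^ 2 + 2 * Real.pi * I * (n + r) * z)

lemma thetaChar_term_eq (r τ z : ℂ) (n : ℤ) :
    cexp (Real.pi * I * τ * (n + r) ^ 2 + 2 * Real.pi * I * (n + r) * z) =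
      cexp (Real.pi * I * τ * r ^ 2 + 2 * Real.pi * I * r * z) *
        jacobiTheta₂_term n (z + r * τ) τ := by
  rw [jacobiTheta₂_term, ← Complex.exp_add]
  ring_nf

lemma thetaChar_eq_jacobiTheta₂ (r τ z : ℂ) :
    thetaChar r τ z = cexp (Real.pi * I * τ * r ^ 2 + 2 * Real.pi * I * r * z) *
      jacobiTheta₂ (z + r * τ) τ := by
  simp_rw [thetaChar, thetaChar_term_eq, tsum_mul_left, jacobiTheta₂]

lemma summable_thetaChar (r z : ℂ) {τ : ℂ} (hτ : 0 < τ.im) :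
    Summable fun n : ℤ ↦
      cexp (Real.pi * I * τ * (n + r) ^ 2 + 2 * Real.pi * I * (n + r) * z) := by
  simp_rw [thetaChar_term_eq]
  exact ((summable_jacobiTheta₂_term_iff _ _).2 hτ).mul_left _

lemma thetaChar_add_one_left (r τ z : ℂ) : thetaChar (r + 1) τ z = thetaChar r τ z := by
  unfold thetaChar
  rw [← (Equiv.addRight (1 : ℤ)).tsum_eq
    fun n : ℤ ↦ cexp (Real.pi * I * τ * (n + r) ^ 2 + 2 * Real.pi * I * (n + r) * z)]
  refine tsum_congr fun n ↦ ?_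
  simp only [Equiv.coe_addRight]
  push_cast
  ring_nf

lemma thetaChar_add_one_right (r τ z : ℂ) :
    thetaChar r τ (z + 1) = cexp (2 * Real.pi * I * r) * thetaChar r τ z := by
  rw [thetaChar_eq_jacobiTheta₂, thetaChar_eq_jacobiTheta₂, add_right_comm,
    jacobiTheta₂_add_left, ← mul_assoc, ← Complex.exp_add]
  ring_nf

lemma thetaChar_neg_half_add_one (τ z : ℂ) :
    thetaChar (-1 / 2) τ (z + 1) = -thetaChar (-1 / 2) τ z := by
  have h : (2 * Real.pi * I * (-1 / 2) : ℂ) = -(Real.pi * I) := by ring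
  rw [thetaChar_add_one_right, h, Complex.exp_neg, Complex.exp_pi_mul_I]
  norm_num

/-- The pairs of integers, split according to the parity of the sum:
`(k, l) ↦ (k + l, k - l)` and `(k, l) ↦ (k + l + 1, k - l)`. -/
def sumDiffEquiv : (ℤ × ℤ) ⊕ (ℤ × ℤ) ≃ ℤ × ℤ :=
  Equiv.ofBijective
    (Sum.elim (fun p ↦ (p.1 + p.2, p.1 - p.2)) (fun p ↦ (p.1 + p.2 + 1, p.1 - p.2))) <| by
    constructor
    · rintro (⟨k, l⟩ | ⟨k, l⟩) (⟨k', l'⟩ | ⟨k', l'⟩) h <;>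
        simp only [Sum.elim_inl, Sum.elim_inr, Prod.mk.injEq] at h
      · obtain ⟨rfl, rfl⟩ : k = k' ∧ l = l' := by omega
        rfl
      · omega
      · omega
      · obtain ⟨rfl, rfl⟩ : k = k' ∧ l = l' := by omega
        rfl
    · rintro ⟨n, m⟩
      rcases Int.emod_two_eq_zero_or_one (n + m) with h | h
      · exact ⟨.inl ((n + m) / 2, (n - m) / 2), by
          simp only [Sum.elim_inl, Prod.mk.injEq]; omega⟩
      · exact ⟨.inr ((n + m - 1) / 2, (n - m - 1) / 2), by
          simp only [Sum.elim_inr, Prod.mk.injEq]; omega⟩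

@[simp] lemma sumDiffEquiv_inl (p : ℤ × ℤ) :
    sumDiffEquiv (.inl p) = (p.1 + p.2, p.1 - p.2) := rfl

@[simp] lemma sumDiffEquiv_inr (p : ℤ × ℤ) :
    sumDiffEquiv (.inr p) = (p.1 + p.2 + 1, p.1 - p.2) := rfl

/-- The addition formula for products of theta series. -/
lemma thetaChar_mul_thetaChar (r s x y : ℂ) {τ : ℂ} (hτ : 0 < τ.im) :
    thetaChar r τ x * thetaChar s τ y =
      thetaChar ((r + s) / 2) (2 * τ) (x + y) * thetaChar ((r - s) / 2) (2 * τ) (x - y) +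
      thetaChar ((r + s + 1) / 2) (2 * τ) (x + y) *
        thetaChar ((r - s + 1) / 2) (2 * τ) (x - y) := by
  have hτ' : 0 < (2 * τ).im := by simpa using hτ
  have hs (r z : ℂ) := (summable_thetaChar r z hτ).norm
  have hs' (r z : ℂ) := (summable_thetaChar r z hτ').norm
  have h := summable_mul_of_summable_norm (hs r x) (hs s y)
  rw [← sumDiffEquiv.summable_iff] at h
  unfold thetaChar
  rw [tsum_mul_tsum_of_summable_norm (hs r x) (hs s y),
    tsum_mul_tsum_of_summable_norm (hs' _ _) (hs' _ _),
    tsum_mul_tsum_of_summable_norm (hs' _ _) (hs' _ _), ← sumDiffEquiv.tsum_eq]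
  refine (Summable.tsum_sum (h.comp_injective Sum.inl_injective)
    (h.comp_injective Sum.inr_injective)).trans ?_
  congr 1 <;> refine tsum_congr fun p ↦ ?_ <;>
    simp only [sumDiffEquiv_inl, sumDiffEquiv_inr, Function.comp_apply, ← Complex.exp_add] <;> push_cast <;> ring_nf

lemma θ_eq_thetaChar (τ z : ℂ) : θ τ z = -thetaChar (-1 / 2) τ (z + 1 / 2) := by
  rw [θ, thetaChar, ← tsum_mul_left, ← tsum_neg]
  refine tsum_congr fun n ↦ ?_
  have h : I * (-1 : ℂ) ^ n = -cexp (Real.pi * I * n + -(Real.pi / 2 * I)) := by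
    rw [Complex.exp_add, Complex.exp_neg, Complex.exp_pi_div_two_mul_I,
      mul_comm _ (n : ℂ), Complex.exp_int_mul, Complex.exp_pi_mul_I, Complex.inv_I]
    ring
  rw [← mul_assoc, ← mul_assoc, h, neg_mul, neg_mul, ← Complex.exp_add, ← Complex.exp_add]
  ring_nf

/-- The addition formula for `θ`, separating the two variables. -/
lemma θ_add_mul_θ_sub (x y : ℂ) {τ : ℂ} (hτ : 0 < τ.im) :
    θ τ (x + y) * θ τ (x - y) =
      thetaChar 0 (2 * τ) (2 * x) * thetaChar (-1 / 2) (2 * τ) (2 * y) -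
        thetaChar (-1 / 2) (2 * τ) (2 * x) * thetaChar 0 (2 * τ) (2 * y) := by
  rw [θ_eq_thetaChar, θ_eq_thetaChar, neg_mul_neg, thetaChar_mul_thetaChar _ _ _ _ hτ]
  have h := thetaChar_add_one_left (-1 / 2) (2 * τ) (2 * y)
  have h0 := thetaChar_add_one_right 0 (2 * τ) (2 * x)
  have h1 := thetaChar_neg_half_add_one (2 * τ) (2 * x)
  rw [mul_zero, Complex.exp_zero, one_mul] at h0
  rw [show (-1 / 2 + 1 : ℂ) = 1 / 2 by norm_num] at h
  norm_num at h h0 h1 ⊢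
  ring_nf at h h0 h1 ⊢
  rw [h0, h1, h]
  ring

lemma differentiable_θ {τ : ℂ} (hτ : 0 < τ.im) : Differentiable ℂ (θ τ) := by
  have h : θ τ = fun z ↦ -(cexp (Real.pi * I * τ * (-1 / 2) ^ 2 +
      2 * Real.pi * I * (-1 / 2) * (z + 1 / 2)) * jacobiTheta₂ (z + 1 / 2 + -1 / 2 * τ) τ) := by
    ext z
    rw [θ_eq_thetaChar, thetaChar_eq_jacobiTheta₂]
  have hJ : Differentiable ℂ fun z ↦ jacobiTheta₂ z τ :=
    fun z ↦ differentiableAt_jacobiTheta₂_fst z hτ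
  have hJ' : Differentiable ℂ fun z ↦ jacobiTheta₂ (z + 1 / 2 + -1 / 2 * τ) τ :=
    hJ.comp (g := fun z ↦ jacobiTheta₂ z τ) (by fun_prop)
  rw [h]
  fun_prop

lemma integral_jacobiTheta₂ {τ : ℂ} (hτ : 0 < τ.im) :
    ∫ x in (0 : ℝ)..1, jacobiTheta₂ x τ = 1 := by
  have h := intervalIntegral.hasSum_integral_of_dominated_convergence
    (μ := MeasureTheory.volume) (a := 0) (b := 1)
    (F := fun (n : ℤ) (x : ℝ) ↦ jacobiTheta₂_term n x τ)
    (f := fun x : ℝ ↦ jacobiTheta₂ x τ)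
    (fun n _ ↦ ‖jacobiTheta₂_term n 0 τ‖)
    (fun n ↦ (by unfold jacobiTheta₂_term; fun_prop :
      Continuous fun x : ℝ ↦ jacobiTheta₂_term n x τ).aestronglyMeasurable)
    (fun n ↦ .of_forall fun x _ ↦ by simp [norm_jacobiTheta₂_term])
    (.of_forall fun x _ ↦ ((summable_jacobiTheta₂_term_iff 0 τ).2 hτ).norm)
    (by simp)
    (.of_forall fun x _ ↦ hasSum_jacobiTheta₂_term x hτ)
  refine h.unique ?_
  convert! hasSum_ite_eq (0 : ℤ) (1 : ℂ) using 2 with n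
  have hc : ∀ x : ℝ, jacobiTheta₂_term n x τ =
      cexp (Real.pi * I * n ^ 2 * τ) * cexp (2 * Real.pi * I * n * x) := fun x ↦ by
    rw [jacobiTheta₂_term, ← Complex.exp_add, add_comm]
  simp_rw [hc, intervalIntegral.integral_const_mul]
  split_ifs with hn
  · simp [hn]
  · have h0 : (2 * Real.pi * I * n : ℂ) ≠ 0 := by simp [hn]
    have h1 : cexp (2 * Real.pi * I * n) = 1 :=
      Complex.exp_eq_one_iff.2 ⟨n, by ring⟩
    rw [integral_exp_mul_complex h0]
    simp [h1]

lemma exists_θ_ne_zero {τ : ℂ} (hτ : 0 < τ.im) : ∃ z, θ τ z ≠ 0 := by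
  by_contra! h
  have hJ (z : ℂ) : jacobiTheta₂ z τ = 0 := by
    have := h (z - 1 / 2 + 1 / 2 * τ)
    rw [θ_eq_thetaChar, thetaChar_eq_jacobiTheta₂,
      show z - 1 / 2 + 1 / 2 * τ + 1 / 2 + -1 / 2 * τ = z by ring] at this
    simpa using this
  simpa [hJ] using integral_jacobiTheta₂ hτ

lemma eventually_θ_ne_zero {τ : ℂ} (hτ : 0 < τ.im) {m : ℂ} (hm : m ≠ 0) (c : ℂ) :
    ∀ᶠ t in nhdsWithin (0 : ℂ) {0}ᶜ, θ τ (m * t + c) ≠ 0 := by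
  have hd : Differentiable ℂ fun t ↦ θ τ (m * t + c) :=
    (differentiable_θ hτ).comp (by fun_prop)
  have ha : AnalyticOnNhd ℂ (fun t ↦ θ τ (m * t + c)) Set.univ :=
    fun t _ ↦ hd.analyticAt t
  refine (ha 0 (Set.mem_univ _)).eventually_eq_zero_or_eventually_ne_zero.resolve_left fun h ↦ ?_
  obtain ⟨z, hz⟩ := exists_θ_ne_zero hτ
  have h0 := ha.eqOn_zero_of_preconnected_of_eventuallyEq_zero isPreconnected_univ
    (Set.mem_univ 0) h (Set.mem_univ ((z - c) / m))
  refine hz ?_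
  simpa [mul_div_cancel₀, hm] using h0

/-- Weierstrass's three-term identity, in determinantal form. -/
lemma θ_det_eq (s c₁ c₂ w₁ w₂ : ℂ) {τ : ℂ} (hτ : 0 < τ.im) :
    (θ τ (w₁ + c₁) * θ τ (w₁ - s - c₁)) * (θ τ (w₂ + c₂) * θ τ (w₂ - s - c₂)) -
      (θ τ (w₁ + c₂) * θ τ (w₁ - s - c₂)) * (θ τ (w₂ + c₁) * θ τ (w₂ - s - c₁)) =
    θ τ (c₁ + c₂ + s) * θ τ (c₁ - c₂) * (θ τ (w₁ + w₂ - s) * θ τ (w₁ - w₂)) := by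
  have h (x y : ℂ) : θ τ ((x + y) / 2) * θ τ ((x - y) / 2) =
      thetaChar 0 (2 * τ) x * thetaChar (-1 / 2) (2 * τ) y -
        thetaChar (-1 / 2) (2 * τ) x * thetaChar 0 (2 * τ) y := by
    rw [add_div, sub_div, θ_add_mul_θ_sub _ _ hτ]
    ring_nf
  have hG (w c : ℂ) : θ τ (w + c) * θ τ (w - s - c) =
      thetaChar 0 (2 * τ) (2 * w - s) * thetaChar (-1 / 2) (2 * τ) (2 * c + s) -
        thetaChar (-1 / 2) (2 * τ) (2 * w - s) * thetaChar 0 (2 * τ) (2 * c + s) := by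
    rw [← h]
    ring_nf
  have hC := h (2 * c₁ + s) (2 * c₂ + s)
  have hW := h (2 * w₁ - s) (2 * w₂ - s)
  rw [show (2 * c₁ + s + (2 * c₂ + s)) / 2 = c₁ + c₂ + s by ring,
    show (2 * c₁ + s - (2 * c₂ + s)) / 2 = c₁ - c₂ by ring] at hC
  rw [show (2 * w₁ - s + (2 * w₂ - s)) / 2 = w₁ + w₂ - s by ring,
    show (2 * w₁ - s - (2 * w₂ - s)) / 2 = w₁ - w₂ by ring] at hW
  rw [hC, hW, hG, hG, hG, hG]
  ring

/-- The part of `Fη` which, after a shift of the variables, depends neither on `η` nor on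
`c₁, c₂`. -/
def coreFun (τ a b : ℂ) (p : ℂ × ℂ) : ℂ :=
  θ τ (p.1 + p.2 - a - b) *
    (θ τ (p.1 + a) * θ τ (p.1 + b) * (θ τ (p.2 + a) * θ τ (p.2 + b)))

/-- Shift the variables by `∓η/2` and multiply by `θ(z₁ - z₂ + η)`. -/
def shiftMul (τ η : ℂ) : (ℂ × ℂ → ℂ) →ₗ[ℂ] (ℂ × ℂ → ℂ) where
  toFun φ p := θ τ (p.1 - p.2 + η) * φ (p.1 - η / 2, p.2 + η / 2)
  map_add' φ ψ := by ext p; simp [mul_add]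
  map_smul' c φ := by ext p; simp [mul_left_comm]

/-- The span of the functions `coreFun`. -/
def coreSpace (τ : ℂ) : Submodule ℂ (ℂ × ℂ → ℂ) :=
  Submodule.span ℂ (Set.range fun q : ℂ × ℂ ↦ coreFun τ q.1 q.2)

lemma Fη_eq_smul (η a b c₁ c₂ : ℂ) {τ : ℂ} (hτ : 0 < τ.im) :
    (fun p : ℂ × ℂ ↦ Fη τ η a b c₁ c₂ p.1 p.2) =
      (θ τ (c₁ + c₂ + (a + b)) * θ τ (c₁ - c₂)) • shiftMul τ η (coreFun τ a b) := by
  ext p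
  have h := θ_det_eq (a + b) c₁ c₂ (p.1 + η / 2) (p.2 - η / 2) hτ
  simp only [Fη, fV, shiftMul, coreFun, LinearMap.coe_mk, AddHom.coe_mk, Pi.smul_apply,
    smul_eq_mul]
  rw [show p.1 - η / 2 + (p.2 + η / 2) - a - b = p.1 + η / 2 + (p.2 - η / 2) - (a + b) by ring,
    show p.1 - p.2 + η = p.1 + η / 2 - (p.2 - η / 2) by ring,
    show p.1 - η / 2 + a = p.1 + (a - η / 2) by ring,
    show p.1 - η / 2 + b = p.1 + (b - η / 2) by ring,
    show p.2 + η / 2 + a = p.2 + (a + η / 2) by ring,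
    show p.2 + η / 2 + b = p.2 + (b + η / 2) by ring,
    show p.1 - (a - η / 2) - (b - η / 2) - (c₁ + η / 2) =
      p.1 + η / 2 - (a + b) - c₁ by ring,
    show p.1 - (a - η / 2) - (b - η / 2) - (c₂ + η / 2) =
      p.1 + η / 2 - (a + b) - c₂ by ring,
    show p.2 - (a + η / 2) - (b + η / 2) - (c₁ - η / 2) =
      p.2 - η / 2 - (a + b) - c₁ by ring,
    show p.2 - (a + η / 2) - (b + η / 2) - (c₂ - η / 2) =
      p.2 - η / 2 - (a + b) - c₂ by ring,
    show p.1 + (c₁ + η / 2) = p.1 + η / 2 + c₁ by ring,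
    show p.1 + (c₂ + η / 2) = p.1 + η / 2 + c₂ by ring,
    show p.2 + (c₁ - η / 2) = p.2 - η / 2 + c₁ by ring,
    show p.2 + (c₂ - η / 2) = p.2 - η / 2 + c₂ by ring]
  linear_combination θ τ (p.1 + (a - η / 2)) * θ τ (p.1 + (b - η / 2)) *
    (θ τ (p.2 + (a + η / 2)) * θ τ (p.2 + (b + η / 2))) * h

lemma exists_smul_Fη_eq (η a b : ℂ) {τ : ℂ} (hτ : 0 < τ.im) :
    ∃ k c₁ c₂ : ℂ, shiftMul τ η (coreFun τ a b) =
      k • fun p : ℂ × ℂ ↦ Fη τ η a b c₁ c₂ p.1 p.2 := by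
  obtain ⟨t, h₁, h₂⟩ := ((eventually_θ_ne_zero hτ one_ne_zero (a + b)).and
    (eventually_θ_ne_zero hτ one_ne_zero 0)).exists
  refine ⟨(θ τ (t + 0 + (a + b)) * θ τ (t - 0))⁻¹, t, 0, ?_⟩
  rw [Fη_eq_smul _ _ _ _ _ hτ, smul_smul, inv_mul_cancel₀, one_smul]
  simp only [one_mul, add_zero] at h₁ h₂
  simpa using ⟨h₁, h₂⟩

lemma Rspace_eq_map (η : ℂ) {τ : ℂ} (hτ : 0 < τ.im) :
    Rspace τ η = (coreSpace τ).map (shiftMul τ η) := by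
  rw [coreSpace, Submodule.map_span]
  apply le_antisymm <;> refine Submodule.span_le.2 ?_
  · rintro _ ⟨a, b, c₁, c₂, rfl⟩
    rw [Fη_eq_smul _ _ _ _ _ hτ]
    exact Submodule.smul_mem _ _ (Submodule.subset_span ⟨_, ⟨(a, b), rfl⟩, rfl⟩)
  · rintro _ ⟨_, ⟨⟨a, b⟩, rfl⟩, rfl⟩
    obtain ⟨k, c₁, c₂, h⟩ := exists_smul_Fη_eq η a b hτ
    simp only [h]
    exact Submodule.smul_mem _ _ (Submodule.subset_span ⟨a, b, c₁, c₂, rfl⟩)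

lemma continuous_of_mem_coreSpace {τ : ℂ} (hτ : 0 < τ.im) {φ : ℂ × ℂ → ℂ}
    (hφ : φ ∈ coreSpace τ) : Continuous φ := by
  have hθ := (differentiable_θ hτ).continuous
  induction hφ using Submodule.span_induction with
  | mem x hx =>
    obtain ⟨q, rfl⟩ := hx
    unfold coreFun
    fun_prop
  | zero => exact continuous_const
  | add x y _ _ hx hy => exact hx.add hy
  | smul c x _ hx => exact hx.const_smul c

lemma eq_zero_of_shiftMul_eq_zero {η τ : ℂ} (hτ : 0 < τ.im) {φ : ℂ × ℂ → ℂ}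
    (hφ : Continuous φ) (h : shiftMul τ η φ = 0) : φ = 0 := by
  ext ⟨u, v⟩
  have hc : Continuous fun t : ℂ ↦ φ (u + t, v) := by fun_prop
  have ht : Filter.Tendsto (fun t : ℂ ↦ φ (u + t, v)) (nhdsWithin 0 {0}ᶜ)
      (nhds (φ (u, v))) := by
    simpa using hc.continuousAt.continuousWithinAt (x := 0) (s := {0}ᶜ) |>.tendsto
  refine tendsto_nhds_unique ht (tendsto_const_nhds.congr' ?_)
  filter_upwards [eventually_θ_ne_zero hτ one_ne_zero (u - v + 2 * η)] with t hθ
  have h0 := congrFun h (u + t + η / 2, v - η / 2)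
  simp only [shiftMul, LinearMap.coe_mk, AddHom.coe_mk, Pi.zero_apply, add_sub_cancel_right,
    sub_add_cancel] at h0
  rw [show u + t + η / 2 - (v - η / 2) + η = 1 * t + (u - v + 2 * η) by ring] at h0
  simpa using ((mul_eq_zero.1 h0).resolve_left hθ).symm

lemma rank_map_shiftMul (η : ℂ) {τ : ℂ} (hτ : 0 < τ.im) :
    Module.rank ℂ ((coreSpace τ).map (shiftMul τ η)) = Module.rank ℂ (coreSpace τ) := by
  have hinj : Function.Injective ((shiftMul τ η).domRestrict (coreSpace τ)) := by
    rw [← LinearMap.ker_eq_bot, LinearMap.ker_eq_bot']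
    intro φ hφ
    exact Subtype.ext
      (eq_zero_of_shiftMul_eq_zero hτ (continuous_of_mem_coreSpace hτ φ.2) hφ)
  rw [← LinearMap.range_domRestrict]
  exact (LinearEquiv.ofInjective _ hinj).rank_eq.symm

/-- The four theta functions spanning the space which contains all `fV τ α β γ`. -/
def quarticBasis (τ : ℂ) (j : Fin 4) (z : ℂ) : ℂ :=
  thetaChar ((j : ℂ) / 4) (2 * (2 * τ)) (4 * z)

lemma exists_fV_eq_sum (α β γ : ℂ) {τ : ℂ} (hτ : 0 < τ.im) :
    ∃ k : Fin 4 → ℂ, ∀ z, fV τ α β γ z = ∑ j, k j * quarticBasis τ j z := by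
  have hτ' : 0 < (2 * τ).im := by simpa using hτ
  have hf (z : ℂ) : fV τ α β γ z =
      (θ τ (z + (α + β) / 2 + (α - β) / 2) * θ τ (z + (α + β) / 2 - (α - β) / 2)) *
      (θ τ (z - (α + β) / 2 + (γ + (α + β) / 2)) *
        θ τ (z - (α + β) / 2 - (γ + (α + β) / 2))) := by
    rw [fV]
    ring_nf
  have hT (r s z : ℂ) : thetaChar r (2 * τ) (2 * (z + (α + β) / 2)) *
      thetaChar s (2 * τ) (2 * (z - (α + β) / 2)) =
      thetaChar ((r + s) / 2) (2 * (2 * τ)) (4 * z) *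
        thetaChar ((r - s) / 2) (2 * (2 * τ)) (2 * (α + β)) +
      thetaChar ((r + s + 1) / 2) (2 * (2 * τ)) (4 * z) *
        thetaChar ((r - s + 1) / 2) (2 * (2 * τ)) (2 * (α + β)) := by
    rw [thetaChar_mul_thetaChar _ _ _ _ hτ']
    ring_nf
  have hper (r z : ℂ) := thetaChar_add_one_left r (2 * (2 * τ)) z
  have hQQ := hT 0 0
  have hQP := hT 0 (-1 / 2)
  have hPQ := hT (-1 / 2) 0
  have hPP := hT (-1 / 2) (-1 / 2)
  have h1 := hper (-1 / 2)
  have h2 := hper (-1 / 4)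
  norm_num at hQQ hQP hPQ hPP h1 h2
  obtain ⟨p, hp⟩ : ∃ p, thetaChar (-(1 / 2)) (2 * τ) (α - β) = p := ⟨_, rfl⟩
  obtain ⟨q, hq⟩ : ∃ q, thetaChar 0 (2 * τ) (α - β) = q := ⟨_, rfl⟩
  obtain ⟨p', hp'⟩ : ∃ p, thetaChar (-(1 / 2)) (2 * τ) (2 * γ + (α + β)) = p := ⟨_, rfl⟩
  obtain ⟨q', hq'⟩ : ∃ q, thetaChar 0 (2 * τ) (2 * γ + (α + β)) = q := ⟨_, rfl⟩
  obtain ⟨S, hS⟩ : ∃ S : ℂ → ℂ, ∀ r, thetaChar r (2 * (2 * τ)) (2 * (α + β)) = S r :=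
    ⟨_, fun _ ↦ rfl⟩
  simp only [hS] at hQQ hQP hPQ hPP
  refine ⟨![p * p' * S 0 + q * q' * S (1 / 2), -(p * q' * S (3 / 4) + q * p' * S (1 / 4)),
    p * p' * S (1 / 2) + q * q' * S 0, -(p * q' * S (1 / 4) + q * p' * S (-(1 / 4)))],
    fun z ↦ ?_⟩
  have e₁ : 2 * ((α - β) / 2) = α - β := by ring
  have e₂ : 2 * (γ + (α + β) / 2) = 2 * γ + (α + β) := by ring
  have e₃ : (2 / 4 : ℂ) = 1 / 2 := by norm_num
  rw [hf, θ_add_mul_θ_sub _ _ hτ, θ_add_mul_θ_sub _ _ hτ, e₁, e₂, neg_div, hp, hq, hp', hq']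
  simp only [Fin.sum_univ_four, quarticBasis, Matrix.cons_val, Fin.coe_ofNat_eq_mod,
    Nat.reduceMod, Nat.cast_zero, Nat.cast_one, Nat.cast_ofNat, zero_div, e₃, h1, h2]
  linear_combination p * p' * hQQ z - p * q' * hQP z - q * p' * hPQ z + q * q' * hPP z +
    p * p' * S (1 / 2) * h1 (4 * z)

/-- The six pairs `i < j` in `Fin 4`; the `i`-th and the `(5 - i)`-th are complementary. -/
def pairs : Fin 6 → Fin 4 × Fin 4 :=
  ![(0, 1), (0, 2), (0, 3), (1, 2), (1, 3), (2, 3)]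

/-- The antisymmetric products of the functions `quarticBasis`. -/
def quarticWedge (τ : ℂ) (i : Fin 6) (p : ℂ × ℂ) : ℂ :=
  quarticBasis τ (pairs i).1 p.1 * quarticBasis τ (pairs i).2 p.2 -
    quarticBasis τ (pairs i).2 p.1 * quarticBasis τ (pairs i).1 p.2

lemma Rspace_zero_le {τ : ℂ} (hτ : 0 < τ.im) :
    Rspace τ 0 ≤ Submodule.span ℂ (Set.range (quarticWedge τ)) := by
  refine Submodule.span_le.2 ?_
  rintro _ ⟨a, b, c₁, c₂, rfl⟩
  obtain ⟨k, hk⟩ := exists_fV_eq_sum a b c₁ hτ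
  obtain ⟨l, hl⟩ := exists_fV_eq_sum a b c₂ hτ
  have h : (fun p : ℂ × ℂ ↦ Fη τ 0 a b c₁ c₂ p.1 p.2) =
      ∑ i, (k (pairs i).1 * l (pairs i).2 - k (pairs i).2 * l (pairs i).1) •
        quarticWedge τ i := by
    ext p
    simp only [Fη, zero_div, sub_zero, add_zero, hk, hl, Finset.sum_apply, Pi.smul_apply,
      smul_eq_mul, quarticWedge, Fin.sum_univ_six, Fin.sum_univ_four]
    simp only [pairs, Matrix.cons_val]
    ring
  rw [h]
  exact Submodule.sum_mem _ fun i _ ↦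
    Submodule.smul_mem _ _ (Submodule.subset_span (Set.mem_range_self i))

lemma rank_coreSpace_le {τ : ℂ} (hτ : 0 < τ.im) : Module.rank ℂ (coreSpace τ) ≤ 6 := by
  rw [← rank_map_shiftMul 0 hτ, ← Rspace_eq_map 0 hτ]
  calc Module.rank ℂ (Rspace τ 0)
      ≤ Module.rank ℂ (Submodule.span ℂ (Set.range (quarticWedge τ))) :=
        Submodule.rank_mono (Rspace_zero_le hτ)
    _ ≤ Cardinal.mk (Set.range (quarticWedge τ)) := rank_span_le _
    _ ≤ Cardinal.mk (Fin 6) := Cardinal.mk_range_le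
    _ = 6 := by simp

lemma le_rank_coreSpace {τ : ℂ} (hτ : 0 < τ.im) : 6 ≤ Module.rank ℂ (coreSpace τ) := by
  have hev : ∀ i j : Fin 4, ∀ᶠ t in nhdsWithin (0 : ℂ) {0}ᶜ,
      i ≠ j → θ τ (((i : ℂ) - j) * t) ≠ 0 := fun i j ↦ by
    by_cases hij : i = j
    · simp [hij]
    · have h : (i : ℂ) - j ≠ 0 := sub_ne_zero.2 fun h ↦ hij (Fin.ext (by exact_mod_cast h))
      filter_upwards [eventually_θ_ne_zero hτ h 0] with t ht _
      simpa using ht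
  obtain ⟨t, ht, ht6⟩ := ((Filter.eventually_all.2 fun i ↦ Filter.eventually_all.2 (hev i)).and
    (eventually_θ_ne_zero hτ (m := 6) (by norm_num) 0)).exists
  have hθ0 : θ τ 0 = 0 := by
    have h := θ_add_mul_θ_sub 0 0 hτ
    rw [mul_zero, mul_comm (thetaChar 0 _ _), sub_self] at h
    simpa using h
  let g (i : Fin 6) : coreSpace τ :=
    ⟨coreFun τ (-((pairs i.rev).1 * t)) (-((pairs i.rev).2 * t)),
      Submodule.subset_span ⟨(-((pairs i.rev).1 * t), -((pairs i.rev).2 * t)), rfl⟩⟩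
  let ev (i : Fin 6) : coreSpace τ →ₗ[ℂ] ℂ :=
    (LinearMap.proj (((pairs i).1 * t, (pairs i).2 * t) : ℂ × ℂ)).comp (coreSpace τ).subtype
  have hg (i j : Fin 6) : ev j (g i) =
      θ τ (((pairs j).1 + (pairs j).2 + (pairs i.rev).1 + (pairs i.rev).2) * t) *
        (θ τ (((pairs j).1 - (pairs i.rev).1) * t) * θ τ (((pairs j).1 - (pairs i.rev).2) * t) *
        (θ τ (((pairs j).2 - (pairs i.rev).1) * t) *
          θ τ (((pairs j).2 - (pairs i.rev).2) * t))) := by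
    simp only [ev, g, LinearMap.comp_apply, Submodule.subtype_apply, LinearMap.proj_apply, coreFun]
    ring_nf
  have hli : LinearIndependent ℂ g := by
    rw [Fintype.linearIndependent_iff]
    intro c hc j
    have h := congrArg (ev j) hc
    rw [map_sum, map_zero, Finset.sum_eq_single j, map_smul, smul_eq_mul] at h
    · refine (mul_eq_zero.1 h).resolve_right ?_
      have hd : ∀ j : Fin 6,
          (pairs j).1 ≠ (pairs j.rev).1 ∧ (pairs j).1 ≠ (pairs j.rev).2 ∧
          (pairs j).2 ≠ (pairs j.rev).1 ∧ (pairs j).2 ≠ (pairs j.rev).2 := by decide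
      have hs : ∀ j : Fin 6, ((pairs j).1 : ℕ) + (pairs j).2 + (pairs j.rev).1 +
          (pairs j.rev).2 = 6 := by decide
      have hs' : ((pairs j).1 + (pairs j).2 + (pairs j.rev).1 + (pairs j.rev).2 : ℂ) = 6 := by
        exact_mod_cast hs j
      obtain ⟨h₁, h₂, h₃, h₄⟩ := hd j
      rw [hg, hs']
      rw [add_zero] at ht6
      exact mul_ne_zero ht6 (mul_ne_zero (mul_ne_zero (ht _ _ h₁) (ht _ _ h₂))
        (mul_ne_zero (ht _ _ h₃) (ht _ _ h₄)))
    · intro i _ hij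
      have hd : ∀ i j : Fin 6, i ≠ j →
          (pairs j).1 = (pairs i.rev).1 ∨ (pairs j).1 = (pairs i.rev).2 ∨
          (pairs j).2 = (pairs i.rev).1 ∨ (pairs j).2 = (pairs i.rev).2 := by decide
      rw [map_smul, hg]
      rcases hd i j hij with h | h | h | h <;> simp [h, hθ0]
    · simp
  simpa using hli.cardinal_le_rank

/-- Lemma B.1: for every `η ∈ ℂ` the relation space `R_η` is
6-dimensional. -/
theorem statement16 (τ : ℂ) (hτ : 0 < τ.im) (η : ℂ) :
    Module.rank ℂ ↥(Rspace τ η) = 6 := by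
  rw [Rspace_eq_map η hτ, rank_map_shiftMul η hτ]
  exact le_antisymm (rank_coreSpace_le hτ) (le_rank_coreSpace hτ)
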